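/- Let G be a finite abelian group and assume that lim_{n → ∞} η₁(G^n) / |G|^{n/2} = 1. Then for each integer g ≥ 1, the limit lim_{n → ∞} η_g(G^n) / (√g · |G|^{n/2}) exists. -/

import Mathlib

/-!
Taking products gives `η_g(H × K) ≤ η_g(H) η_1(K)`: if `A` is a `g`-difference basis of `H` and `B`
is a `1`-difference basis of `K`, then `A × B` is a `g`-difference basis of `H × K`
(`IsDiffBasis.prod`, `etaMin_prod_le`). Write `a n` and `b n` for the normalized values of
`η_g(G^n)` and `η_1(G^n)`. Then `a (m + n) ≤ a m * b n`, and since `b n → 1` every `a m` bounds the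
limit superior of `a`; hence `a` converges to the infimum of its values
(`exists_tendsto_of_le_mul`).

`etaMin` takes the junk value `0` on groups without any `g`-difference basis. If some `G^m` has
one, then so do all later powers and the argument applies from `m` on; otherwise `a` is
identically `0`.
-/

open Filter Topology

/-- `B` is a `g`-difference basis for the additive group `G`: every `x ∈ G` has at least `g`
representations `x = b₁ - b₂` with ordered pairs `(b₁, b₂) ∈ B × B`. -/
def IsDiffBasis {G : Type*} [AddCommGroup G] (g : ℕ) (B : Set G) : Prop :=
  ∀ x : G, g ≤ Nat.card {p : G × G // p.1 ∈ B ∧ p.2 ∈ B ∧ p.1 - p.2 = x}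

/-- `η_g(G)`: the minimum size of a `g`-difference basis for `G`. -/
noncomputable def etaMin (G : Type*) [AddCommGroup G] (g : ℕ) : ℕ :=
  sInf {k : ℕ | ∃ B : Set G, B.Finite ∧ IsDiffBasis g B ∧ Nat.card B = k}

lemma IsDiffBasis.prod {H K M : Type*} [AddCommGroup H] [AddCommGroup K] [AddCommGroup M]
    [Finite M] (e : H × K ≃+ M) {g : ℕ} {A : Set H} {B : Set K}
    (hA : IsDiffBasis g A) (hB : IsDiffBasis 1 B) : IsDiffBasis g (e '' (A ×ˢ B)) := by
  intro x
  obtain ⟨⟨y, z⟩, rfl⟩ := e.surjective x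
  have hz := hB z
  obtain ⟨⟨⟨q, q'⟩, hq, hq', hqz⟩⟩ := (Nat.card_pos_iff.mp (by omega :
    0 < Nat.card {p : K × K // p.1 ∈ B ∧ p.2 ∈ B ∧ p.1 - p.2 = z})).1
  refine (hA y).trans ?_
  -- a single representation of `z` is enough: attach it to each representation of `y`
  refine Nat.card_le_card_of_injective
    (fun p => ⟨(e (p.1.1, q), e (p.1.2, q')), ⟨_, ⟨p.2.1, hq⟩, rfl⟩, ⟨_, ⟨p.2.2.1, hq'⟩, rfl⟩, ?_⟩) ?_
  · rw [← map_sub, Prod.mk_sub_mk, p.2.2.2]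
    simp only at hqz
    rw [hqz]
  · rintro ⟨⟨a, b⟩, ha⟩ ⟨⟨c, d⟩, hc⟩ hac
    simpa using hac

lemma isDiffBasis_one_univ (K : Type*) [AddCommGroup K] [Finite K] :
    IsDiffBasis 1 (Set.univ : Set K) := fun x =>
  Nat.card_pos_iff.mpr ⟨⟨⟨(x, 0), trivial, trivial, sub_zero x⟩⟩, inferInstance⟩

lemma exists_card_eq_etaMin {H : Type*} [AddCommGroup H] {g : ℕ} {A : Set H}
    (hf : A.Finite) (hA : IsDiffBasis g A) :
    ∃ A' : Set H, IsDiffBasis g A' ∧ Nat.card A' = etaMin H g := by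
  obtain ⟨A', -, h1, h2⟩ := Nat.sInf_mem
    (s := {k : ℕ | ∃ B : Set H, B.Finite ∧ IsDiffBasis g B ∧ Nat.card B = k}) ⟨_, A, hf, hA, rfl⟩
  exact ⟨A', h1, h2⟩

/-- Submultiplicativity. The hypothesis that `H` has some `g`-difference basis excludes the
junk value `0` on the right-hand side. -/
lemma etaMin_prod_le {H K M : Type*} [AddCommGroup H] [AddCommGroup K] [AddCommGroup M]
    [Finite H] [Finite K] [Finite M] (e : H × K ≃+ M) {g : ℕ}
    (hex : ∃ A : Set H, IsDiffBasis g A) :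
    etaMin M g ≤ etaMin H g * etaMin K 1 := by
  obtain ⟨A₀, hA₀⟩ := hex
  obtain ⟨A, hA, hAc⟩ := exists_card_eq_etaMin A₀.toFinite hA₀
  obtain ⟨B, hB, hBc⟩ := exists_card_eq_etaMin Set.finite_univ (isDiffBasis_one_univ K)
  refine Nat.sInf_le ⟨e '' (A ×ˢ B), Set.toFinite _, hA.prod e hB, ?_⟩
  rw [← hAc, ← hBc, Nat.card_image_of_injective e.injective, Nat.card_coe_set_eq, Set.ncard_prod,
    Nat.card_coe_set_eq, Nat.card_coe_set_eq]

/-- Concatenation of tuples as an isomorphism `G^m × G^n ≃ G^(m+n)`. -/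
def appendAddEquiv (G : Type*) [AddCommGroup G] (m n : ℕ) :
    (Fin m → G) × (Fin n → G) ≃+ (Fin (m + n) → G) :=
  { Fin.appendEquiv m n with
    map_add' := by
      rintro ⟨a, b⟩ ⟨c, d⟩
      funext i
      refine Fin.addCases (fun j => ?_) (fun j => ?_) i <;> simp [Fin.appendEquiv] }

/-- A nonnegative sequence which is eventually submultiplicative up to factors tending to `1`
converges, namely to the infimum of its values from `m₀` on. -/
lemma exists_tendsto_of_le_mul {a b : ℕ → ℝ} {m₀ : ℕ} (ha : ∀ n, 0 ≤ a n)
    (hb : Tendsto b atTop (𝓝 1)) (hab : ∀ m n, m₀ ≤ m → a (m + n) ≤ a m * b n) :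
    ∃ L, Tendsto a atTop (𝓝 L) := by
  have hbdd : BddBelow (a '' Set.Ici m₀) := ⟨0, by rintro _ ⟨n, -, rfl⟩; exact ha n⟩
  refine ⟨sInf (a '' Set.Ici m₀), tendsto_order.mpr ⟨fun c hc => ?_, fun c hc => ?_⟩⟩
  · filter_upwards [eventually_ge_atTop m₀] with n hn
    exact hc.trans_le (csInf_le hbdd ⟨n, hn, rfl⟩)
  · obtain ⟨_, ⟨m, hm, rfl⟩, hmc⟩ := exists_lt_of_csInf_lt (Set.nonempty_Ici.image a) hc
    have hlim : Tendsto (fun n => a m * b n) atTop (𝓝 (a m)) := by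
      simpa using hb.const_mul (a m)
    have hev : ∀ᶠ n in atTop, a (n + m) < c := by
      filter_upwards [hlim.eventually_lt_const hmc] with n hn
      rw [add_comm]
      exact (hab m n hm).trans_lt hn
    obtain ⟨N, hN⟩ := eventually_atTop.mp hev
    filter_upwards [eventually_ge_atTop (N + m)] with n hn
    have := hN (n - m) (by omega)
    rwa [Nat.sub_add_cancel (by omega)] at this

/-- If `η₁(G^n) = (1 + o(1))|G|^{n/2}` as `n → ∞`, then for each `g ≥ 1` the limit
`lim_{n → ∞} η_g(G^n)/(√g |G|^{n/2})` exists. -/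
theorem stmt12 (G : Type*) [AddCommGroup G] [Fintype G]
    (h : Filter.Tendsto (fun n : ℕ => (etaMin (Fin n → G) 1 : ℝ) /
        (Fintype.card G : ℝ) ^ ((n : ℝ) / 2)) Filter.atTop (nhds 1)) :
    ∀ g : ℕ, 1 ≤ g →
      ∃ L : ℝ, Filter.Tendsto (fun n : ℕ => (etaMin (Fin n → G) g : ℝ) /
          (Real.sqrt g * (Fintype.card G : ℝ) ^ ((n : ℝ) / 2))) Filter.atTop (nhds L) := by
  intro g hg
  by_cases hex : ∃ m, ∃ A : Set (Fin m → G), IsDiffBasis g A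
  · obtain ⟨m₀, A, hA⟩ := hex
    have hall : ∀ m, m₀ ≤ m → ∃ A : Set (Fin m → G), IsDiffBasis g A := by
      intro m hm
      obtain ⟨k, rfl⟩ := Nat.exists_eq_add_of_le hm
      exact ⟨_, hA.prod (appendAddEquiv G m₀ k) (isDiffBasis_one_univ _)⟩
    refine exists_tendsto_of_le_mul (m₀ := m₀) (fun n => by positivity) h fun m n hm => ?_
    have hle : (etaMin (Fin (m + n) → G) g : ℝ) ≤
        etaMin (Fin m → G) g * etaMin (Fin n → G) 1 := by
      exact_mod_cast etaMin_prod_le (appendAddEquiv G m n) (hall m hm)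
    have hq : (0 : ℝ) < Fintype.card G := by exact_mod_cast Fintype.card_pos
    rw [div_mul_div_comm, mul_assoc, ← Real.rpow_add hq]
    push_cast
    rw [← add_div]
    gcongr
  · refine ⟨0, tendsto_const_nhds.congr fun n => ?_⟩
    have h0 : etaMin (Fin n → G) g = 0 := by
      refine Nat.sInf_eq_zero.mpr (Or.inr (Set.eq_empty_of_forall_notMem ?_))
      rintro k ⟨B, -, hB, -⟩
      exact hex ⟨n, B, hB⟩
    simp [h0]
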